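/- arXiv:2406.01350 — 2 statements merged into one kernel-verified Lean document; each statement's English description precedes it below -/
import Mathlib

section
/- There are exactly 90 sequences of six CNOT gates on three qubits (each gate chosen among the six CNOT gates CNOT a b with a ≠ b in Fin 3) whose composition equals the cyclic-shift permutation gate x ↦ x ∘ c, where c is the 3-cycle sending j to j+1 (mod 3). -/
/-- The CNOT gate with control `a` and target `b` acting on computational
basis states of an `n`-qubit system. -/
def CNOT {n : ℕ} (a b : Fin n) (x : Fin n → Bool) : Fin n → Bool :=
  fun j => if j = b then xor (x a) (x b) else x j

/-- The composition of a list of CNOT gates, applied in order. -/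
def circuit {n : ℕ} (L : List (Fin n × Fin n)) (x : Fin n → Bool) : Fin n → Bool :=
  L.foldl (fun y g => CNOT g.1 g.2 y) x

/-- Splitting off the first letter when counting words with a given property. -/
theorem Nat.card_ofFn_succ {α : Type*} [Fintype α] (P : List α → Prop) (k : ℕ) :
    Nat.card {t : Fin (k + 1) → α // P (List.ofFn t)} =
      ∑ g : α, Nat.card {t : Fin k → α // P (g :: List.ofFn t)} := by
  rw [← Nat.card_sigma]
  refine Nat.card_congr
    { toFun := fun t => ⟨t.1 0, Fin.tail t.1, ?_⟩
      invFun := fun t => ⟨Fin.cons t.1 t.2.1, ?_⟩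
      left_inv := fun t => Subtype.ext (Fin.cons_self_tail t.1)
      right_inv := fun _ => rfl }
  · have h := t.2
    rwa [List.ofFn_succ] at h
  · simpa [List.ofFn_succ] using t.2.2

/-- The position of a three-bit basis state in a truth table. -/
def truthIndex (x : Fin 3 → Bool) : ℕ :=
  (x 0).toNat + 2 * (x 1).toNat + 4 * (x 2).toNat

theorem exists_truthIndex_eq {i : ℕ} (hi : i < 8) : ∃ x, truthIndex x = i := by
  revert i; decide

/-- The map on three-bit states whose output bits have truth tables `a`, `b`, `c`. -/
def ofTruthTables (a b c : BitVec 8) (x : Fin 3 → Bool) : Fin 3 → Bool :=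
  ![a.getLsbD (truthIndex x), b.getLsbD (truthIndex x), c.getLsbD (truthIndex x)]

theorem ofTruthTables_inj {a b c a' b' c' : BitVec 8} :
    ofTruthTables a b c = ofTruthTables a' b' c' ↔ a = a' ∧ b = b' ∧ c = c' := by
  refine ⟨fun h => ⟨?_, ?_, ?_⟩, by rintro ⟨rfl, rfl, rfl⟩; rfl⟩ <;>
    refine BitVec.eq_of_getLsbD_eq fun i hi => ?_ <;>
    obtain ⟨x, rfl⟩ := exists_truthIndex_eq hi
  · exact congrFun (congrFun h x) 0
  · exact congrFun (congrFun h x) 1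
  · exact congrFun (congrFun h x) 2

theorem ofTruthTables_id : ofTruthTables 0xAA 0xCC 0xF0 = id := by
  decide

theorem ofTruthTables_finRotate :
    ofTruthTables 0xCC 0xF0 0xAA = fun x => x ∘ finRotate 3 := by
  decide

/-- The number of words of `k` CNOT gates on three qubits that turn the truth tables
`a`, `b`, `c` into those of the cyclic shift. -/
def countToShift : ℕ → BitVec 8 → BitVec 8 → BitVec 8 → ℕ
  | 0, a, b, c => if a = 0xCC ∧ b = 0xF0 ∧ c = 0xAA then 1 else 0
  | k + 1, a, b, c =>
    countToShift k a (a ^^^ b) c + countToShift k a b (a ^^^ c) +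
      countToShift k (b ^^^ a) b c + countToShift k a b (b ^^^ c) +
      countToShift k (c ^^^ a) b c + countToShift k a (c ^^^ b) c

theorem sum_cnot_pairs {M : Type*} [AddCommMonoid M] (f : Fin 3 × Fin 3 → M) :
    ∑ g : {p : Fin 3 × Fin 3 // p.1 ≠ p.2}, f g =
      f (0, 1) + f (0, 2) + f (1, 0) + f (1, 2) + f (2, 0) + f (2, 1) := by
  rw [← Finset.sum_subtype {(0, 1), (0, 2), (1, 0), (1, 2), (2, 0), (2, 1)} (by decide)]
  simp [add_assoc]

theorem CNOT_comp_ofTruthTables (a b c : BitVec 8) :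
    CNOT 0 1 ∘ ofTruthTables a b c = ofTruthTables a (a ^^^ b) c ∧
    CNOT 0 2 ∘ ofTruthTables a b c = ofTruthTables a b (a ^^^ c) ∧
    CNOT 1 0 ∘ ofTruthTables a b c = ofTruthTables (b ^^^ a) b c ∧
    CNOT 1 2 ∘ ofTruthTables a b c = ofTruthTables a b (b ^^^ c) ∧
    CNOT 2 0 ∘ ofTruthTables a b c = ofTruthTables (c ^^^ a) b c ∧
    CNOT 2 1 ∘ ofTruthTables a b c = ofTruthTables a (c ^^^ b) c := by
  refine ⟨?_, ?_, ?_, ?_, ?_, ?_⟩ <;> funext x j <;> fin_cases j <;>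
    simp [CNOT, ofTruthTables]

theorem circuit_cons {n : ℕ} (g : Fin n × Fin n) (L : List (Fin n × Fin n)) :
    circuit (g :: L) = circuit L ∘ CNOT g.1 g.2 :=
  rfl

theorem card_circuit_comp_eq_shift (k : ℕ) (a b c : BitVec 8) :
    Nat.card {t : Fin k → {p : Fin 3 × Fin 3 // p.1 ≠ p.2} //
      circuit ((List.ofFn t).map Subtype.val) ∘ ofTruthTables a b c =
        fun x => x ∘ finRotate 3} = countToShift k a b c := by
  induction k generalizing a b c with
  | zero =>
    have h : circuit ([] : List (Fin 3 × Fin 3)) ∘ ofTruthTables a b c =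
        ofTruthTables a b c := rfl
    simp only [List.ofFn_zero, List.map_nil, h, ← ofTruthTables_finRotate,
      ofTruthTables_inj, countToShift]
    split_ifs with hs
    · simp [hs]
    · exact Nat.card_eq_zero.mpr (Or.inl ⟨fun t => hs t.2⟩)
  | succ k ih =>
    rw [Nat.card_ofFn_succ (fun L => circuit (L.map Subtype.val) ∘ ofTruthTables a b c =
      fun x => x ∘ finRotate 3)]
    simp only [List.map_cons, circuit_cons, Function.comp_assoc]
    rw [sum_cnot_pairs fun g => Nat.card {t : Fin k → {p : Fin 3 × Fin 3 // p.1 ≠ p.2} //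
      circuit ((List.ofFn t).map Subtype.val) ∘ CNOT g.1 g.2 ∘ ofTruthTables a b c =
        fun x => x ∘ finRotate 3}]
    obtain ⟨h₁, h₂, h₃, h₄, h₅, h₆⟩ := CNOT_comp_ofTruthTables a b c
    simp only [h₁, h₂, h₃, h₄, h₅, h₆, ih, countToShift]

theorem countToShift_six : countToShift 6 0xAA 0xCC 0xF0 = 90 := by
  decide +kernel

/-- There are exactly 90 sequences (6-tuples) of CNOT gates on three qubits whose
composition equals the cyclic-shift permutation gate for `j ↦ j + 1 (mod 3)`. -/
theorem card_six_cnot_sequences_cycle3 :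
    Fintype.card {t : Fin 6 → {p : Fin 3 × Fin 3 // p.1 ≠ p.2} //
      circuit ((List.ofFn t).map Subtype.val) = fun x => x ∘ (finRotate 3)} = 90 := by
  rw [← Nat.card_eq_fintype_card, ← countToShift_six, ← card_circuit_comp_eq_shift,
    ofTruthTables_id]
  rfl
end

section
/- On five qubits, the least k such that some list of k CNOT gates has composition equal to the cyclic-shift permutation gate x ↦ x ∘ c, where c : Fin 5 → Fin 5 is the 5-cycle sending j to j+1 (mod 5), equals 12; i.e. C(5) = 12. -/
/-! ### Sets of 20-bit indices stored as natural numbers -/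

/-- `force n k` is `k n`, arranged so that `n` is evaluated to a literal first. -/
def force (n : ℕ) (k : ℕ → ℕ) : ℕ := Nat.rec (k 0) (fun m _ => k (m + 1)) n

theorem force_eq (n : ℕ) (k : ℕ → ℕ) : force n k = k n := by cases n <;> rfl

/-- `2 ^ k` adjacent copies of the block `base` of width `w`. -/
def tile (base w : ℕ) : ℕ → ℕ
  | 0 => base
  | k + 1 => force (tile base w k) fun T => T ||| (T <<< (w * 2 ^ k))

/-- The set of the indices below `2 ^ 20` whose bit `t` is clear. -/
def lowMask (t : ℕ) : ℕ := tile (2 ^ 2 ^ t - 1) (2 ^ (t + 1)) (19 - t)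

/-- The set of the indices below `2 ^ 20` whose bit `t` is set. -/
def highMask (t : ℕ) : ℕ := lowMask t <<< 2 ^ t

/-- The image of the set `S` under negation of bit `t`. -/
def flipBit (t S : ℕ) : ℕ :=
  force S fun S => ((S &&& lowMask t) <<< 2 ^ t) ||| ((S &&& highMask t) >>> 2 ^ t)

/-- The image of the set `S` under negation of bit `t` controlled by bit `s`. -/
def cflipBit (s t S : ℕ) : ℕ :=
  force S fun S => (S &&& lowMask s) ||| flipBit t (S &&& highMask s)

theorem testBit_tile {base w i : ℕ} (h : base.testBit (i % w)) :
    ∀ k, i < w * 2 ^ k → (tile base w k).testBit i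
  | 0, hi => by
    rw [Nat.mod_eq_of_lt (by simpa using hi)] at h
    exact h
  | k + 1, hi => by
    rw [tile, force_eq, Nat.testBit_or, Bool.or_eq_true]
    by_cases hk : i < w * 2 ^ k
    · exact .inl (testBit_tile h k hk)
    · refine .inr ?_
      rw [Nat.testBit_shiftLeft, Bool.and_eq_true]
      refine ⟨by simpa using hk, testBit_tile ?_ k ?_⟩
      · rwa [Nat.sub_mul_mod (by omega)]
      · rw [pow_succ] at hi
        have : w * (2 ^ k * 2) = w * 2 ^ k + w * 2 ^ k := by ring
        omega

theorem testBit_lowMask {t i : ℕ} (ht : t < 20) (hi : i < 2 ^ 20) (h : i.testBit t = false) :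
    (lowMask t).testBit i := by
  refine testBit_tile ?_ _ ?_
  · rw [Nat.testBit_two_pow_sub_one, decide_eq_true_iff, pow_succ, Nat.mod_mul]
    rw [Nat.testBit_eq_decide_div_mod_eq, decide_eq_false_iff_not] at h
    have h0 : i / 2 ^ t % 2 = 0 := by omega
    simpa [h0] using Nat.mod_lt i (Nat.two_pow_pos t)
  · rw [← pow_add]
    convert hi using 2
    omega

theorem ofBits_update_true {n : ℕ} (f : Fin n → Bool) (t : Fin n) :
    Nat.ofBits (Function.update f t true) = Nat.ofBits (Function.update f t false) + 2 ^ t.val := by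
  induction n with
  | zero => exact t.elim0
  | succ n ih =>
    simp only [Nat.ofBits_succ]
    cases t using Fin.cases with
    | zero =>
      have h (v : Bool) : Function.update f 0 v ∘ Fin.succ = f ∘ Fin.succ := by
        ext i; simp
      simp [h]
    | succ s =>
      have h (v : Bool) :
          Function.update f s.succ v ∘ Fin.succ = Function.update (f ∘ Fin.succ) s v := by
        ext i; simp [Function.update_apply]
      have h0 (v : Bool) : Function.update f s.succ v 0 = f 0 :=
        Function.update_of_ne (Fin.succ_ne_zero s).symm v f
      simp only [h, h0, ih, Fin.val_succ, pow_succ]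
      ring

theorem testBit_ofBits_fin {n : ℕ} (f : Fin n → Bool) (t : Fin n) :
    (Nat.ofBits f).testBit t = f t := Nat.testBit_ofBits_lt f t t.2

theorem testBit_lowMask_ofBits {f : Fin 20 → Bool} {t : Fin 20} (h : f t = false) :
    (lowMask t).testBit (Nat.ofBits f) :=
  testBit_lowMask t.2 (Nat.ofBits_lt_two_pow f) (by rw [testBit_ofBits_fin, h])

theorem testBit_highMask_ofBits {f : Fin 20 → Bool} {t : Fin 20} (h : f t = true) :
    (highMask t).testBit (Nat.ofBits f) := by
  have hf : Nat.ofBits f = Nat.ofBits (Function.update f t false) + 2 ^ t.val := by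
    rw [← ofBits_update_true, ← h, Function.update_eq_self]
  rw [highMask, Nat.testBit_shiftLeft, hf, Nat.add_sub_cancel,
    testBit_lowMask_ofBits (Function.update_self t false f)]
  simp

theorem testBit_flipBit {f : Fin 20 → Bool} {S : ℕ} (t : Fin 20) (h : S.testBit (Nat.ofBits f)) :
    (flipBit t S).testBit (Nat.ofBits (Function.update f t (!f t))) := by
  rw [flipBit, force_eq, Nat.testBit_or, Bool.or_eq_true]
  cases hft : f t
  · refine .inl ?_
    rw [Bool.not_false, ofBits_update_true, ← hft, Function.update_eq_self, Nat.testBit_shiftLeft,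
      Nat.add_sub_cancel, Nat.testBit_and, h, testBit_lowMask_ofBits hft]
    simp
  · refine .inr ?_
    rw [Bool.not_true, Nat.testBit_shiftRight, add_comm, ← ofBits_update_true, ← hft,
      Function.update_eq_self, Nat.testBit_and, h, testBit_highMask_ofBits hft, hft]
    rfl

theorem testBit_cflipBit {f : Fin 20 → Bool} {S : ℕ} (s t : Fin 20)
    (h : S.testBit (Nat.ofBits f)) :
    (cflipBit s t S).testBit (Nat.ofBits (Function.update f t (xor (f s) (f t)))) := by
  rw [cflipBit, force_eq, Nat.testBit_or, Bool.or_eq_true]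
  cases hfs : f s
  · refine .inl ?_
    rw [Bool.false_xor, Function.update_eq_self, Nat.testBit_and, h, testBit_lowMask_ofBits hfs]
    rfl
  · refine .inr ?_
    rw [Bool.true_xor]
    exact testBit_flipBit t (by rw [Nat.testBit_and, h, testBit_highMask_ofBits hfs]; rfl)

/-! ### Reachable configurations of wires `1, …, 4` -/

/-- The image of the set `S` under addition of row `a` to row `b`. -/
def addRow (a b S : ℕ) : ℕ :=
  [0, 1, 2, 3, 4].foldr (fun k => cflipBit (k + 5 * a) (k + 5 * b)) S

/-- All configurations that at most one gate with target among the wires `1, …, 4` reaches from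
`S`, while wire `0` carries the input `c`. -/
def step (c S : ℕ) : ℕ :=
  [0, 1, 2, 3].foldr (fun b acc => flipBit (c + 5 * b) S ||| acc)
    ([(0, 1), (0, 2), (0, 3), (1, 0), (1, 2), (1, 3), (2, 0), (2, 1), (2, 3), (3, 0), (3, 1),
      (3, 2)].foldr (fun p acc => addRow p.1 p.2 S ||| acc) S)

/-- A superset of the configurations in `S` in which some wire carries the sum of inputs `0`
and `1`. -/
def select (S : ℕ) : ℕ :=
  [0, 1, 2, 3].foldr (fun b acc => (S &&& highMask (0 + 5 * b) &&& highMask (1 + 5 * b) &&&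
    lowMask (2 + 5 * b) &&& lowMask (3 + 5 * b) &&& lowMask (4 + 5 * b)) ||| acc) 0

/-- Configurations reached after `d` gates, starting from `A` with input `0` on wire `0` or from
`B` with input `1` on it, when just one gate moves wire `0` from the former to the latter. -/
def search : ℕ → ℕ → ℕ → ℕ
  | 0, _, B => B
  | d + 1, A, B => force (step 0 A) fun S => force (step 1 B ||| select A) fun T => search d S T

theorem search_eleven_excludes :
    ((search 11 (2 ^ (2 ^ 1 + 2 ^ 7 + 2 ^ 13 + 2 ^ 19)) 0).testBit
      (2 ^ 2 + 2 ^ 8 + 2 ^ 14 + 2 ^ 15)) = false := by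
  decide +kernel

/-- The rows `1, …, 4` of a configuration, in which wire `j` carries the sum of the inputs `k`
with `M j k`. -/
def lowerBits (M : Fin 5 → Fin 5 → Bool) (i : Fin (4 * 5)) : Bool := M i.divNat.succ i.modNat

theorem lowerBits_finProdFinEquiv (M : Fin 5 → Fin 5 → Bool) (b : Fin 4) (k : Fin 5) :
    lowerBits M (finProdFinEquiv (b, k)) = M b.succ k :=
  congrArg (fun p : Fin 4 × Fin 5 => M p.1.succ p.2) (finProdFinEquiv.symm_apply_apply (b, k))

/-- The index of a configuration. -/
def encode (M : Fin 5 → Fin 5 → Bool) : ℕ := Nat.ofBits (lowerBits M)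

theorem encode_update (M : Fin 5 → Fin 5 → Bool) (b : Fin 4) (k : Fin 5) (v : Bool) :
    encode (Function.update M b.succ (Function.update (M b.succ) k v)) =
      Nat.ofBits (Function.update (lowerBits M) (finProdFinEquiv (b, k)) v) := by
  refine congrArg Nat.ofBits (funext fun i => ?_)
  obtain ⟨⟨j, l⟩, rfl⟩ := finProdFinEquiv.surjective i
  rw [Function.update_apply, lowerBits_finProdFinEquiv, lowerBits_finProdFinEquiv]
  by_cases hj : j = b
  · subst hj
    simp [Function.update_apply]
  · simp [hj]

theorem testBit_flipBit_encode {M : Fin 5 → Fin 5 → Bool} {S : ℕ} (b : Fin 4) (k : Fin 5)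
    (h : S.testBit (encode M)) :
    (flipBit (k + 5 * b) S).testBit
      (encode (Function.update M b.succ (Function.update (M b.succ) k (!M b.succ k)))) := by
  rw [encode_update]
  have := testBit_flipBit (f := lowerBits M) (finProdFinEquiv (m := 4) (n := 5) (b, k)) h
  simp only [lowerBits_finProdFinEquiv] at this
  exact this

theorem testBit_cflipBit_encode {M : Fin 5 → Fin 5 → Bool} {S : ℕ} (a b : Fin 4) (k : Fin 5)
    (h : S.testBit (encode M)) :
    (cflipBit (k + 5 * a) (k + 5 * b) S).testBit
      (encode (Function.update M b.succ
        (Function.update (M b.succ) k (xor (M a.succ k) (M b.succ k))))) := by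
  rw [encode_update]
  have := testBit_cflipBit (f := lowerBits M) (finProdFinEquiv (m := 4) (n := 5) (a, k))
    (finProdFinEquiv (m := 4) (n := 5) (b, k)) h
  simp only [lowerBits_finProdFinEquiv] at this
  exact this

theorem testBit_addRow {M : Fin 5 → Fin 5 → Bool} {S : ℕ} {a b : Fin 4} (hab : a ≠ b)
    (h : S.testBit (encode M)) :
    (addRow a b S).testBit
      (encode (Function.update M b.succ fun k => xor (M a.succ k) (M b.succ k))) := by
  have key : (addRow a b S).testBit _ :=
    testBit_cflipBit_encode a b 0 <| testBit_cflipBit_encode a b 1 <|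
    testBit_cflipBit_encode a b 2 <| testBit_cflipBit_encode a b 3 <|
    testBit_cflipBit_encode a b 4 h
  convert key using 3
  ext j l
  by_cases hj : j = b.succ
  · subst hj
    fin_cases l <;> simp [hab]
  · simp [hj]

theorem testBit_foldr_or {α : Type*} {F : α → ℕ} {base i : ℕ} {l : List α}
    (h : (∃ x ∈ l, (F x).testBit i) ∨ base.testBit i) :
    (l.foldr (fun x acc => F x ||| acc) base).testBit i := by
  induction l with
  | nil => simpa using h
  | cons y l ih =>
    rw [List.foldr_cons, Nat.testBit_or, Bool.or_eq_true]
    simp only [List.mem_cons, exists_eq_or_imp, or_assoc] at h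
    exact h.imp_right ih

/-- A CNOT gate acting on configurations. -/
def applyGate (g : Fin 5 × Fin 5) (M : Fin 5 → Fin 5 → Bool) : Fin 5 → Fin 5 → Bool :=
  fun j k => CNOT g.1 g.2 (M · k) j

/-- A circuit acting on configurations. -/
def applyCircuit (L : List (Fin 5 × Fin 5)) (M : Fin 5 → Fin 5 → Bool) : Fin 5 → Fin 5 → Bool :=
  fun j k => circuit L (M · k) j

theorem applyCircuit_cons (g : Fin 5 × Fin 5) (L : List (Fin 5 × Fin 5))
    (M : Fin 5 → Fin 5 → Bool) : applyCircuit (g :: L) M = applyCircuit L (applyGate g M) := rfl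

theorem applyGate_eq_update (g : Fin 5 × Fin 5) (M : Fin 5 → Fin 5 → Bool) :
    applyGate g M = Function.update M g.2 fun k => xor (M g.1 k) (M g.2 k) := by
  ext j k
  by_cases hj : j = g.2
  · subst hj; simp [applyGate, CNOT]
  · simp [applyGate, CNOT, hj]

theorem applyGate_of_ne {g : Fin 5 × Fin 5} {j : Fin 5} (h : g.2 ≠ j)
    (M : Fin 5 → Fin 5 → Bool) : applyGate g M j = M j := by
  rw [applyGate_eq_update, Function.update_of_ne h.symm]

theorem testBit_step_self {c S i : ℕ} (h : S.testBit i) : (step c S).testBit i :=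
  testBit_foldr_or (.inr (testBit_foldr_or (.inr h)))

theorem testBit_step {M : Fin 5 → Fin 5 → Bool} {S : ℕ} {c : Fin 5} {n : ℕ} (hn : c.val = n)
    {g : Fin 5 × Fin 5} (hM : M 0 = (decide <| · = c)) (hg : g.1 ≠ g.2) (h0 : g.2 ≠ 0)
    (h : S.testBit (encode M)) : (step n S).testBit (encode (applyGate g M)) := by
  subst hn
  obtain ⟨a, b⟩ := g
  obtain ⟨b, rfl⟩ := Fin.exists_succ_eq.2 h0
  rw [applyGate_eq_update]
  rcases Fin.eq_zero_or_eq_succ a with rfl | ⟨a, rfl⟩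
  · refine testBit_foldr_or (.inl ⟨b, by clear * -; revert b; decide, ?_⟩)
    convert testBit_flipBit_encode b c h using 4
    funext k
    by_cases hk : k = c
    · subst hk; simp [hM]
    · simp [hM, hk]
  · have hab : a ≠ b := fun e => hg (congrArg Fin.succ e)
    refine testBit_foldr_or (.inr (testBit_foldr_or (.inl ⟨(a, b), ?_, testBit_addRow hab h⟩)))
    clear * - hab
    revert a b
    decide

theorem testBit_select {M : Fin 5 → Fin 5 → Bool} {S : ℕ} (b : Fin 4)
    (hM : M b.succ = ![true, true, false, false, false]) (h : S.testBit (encode M)) :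
    (select S).testBit (encode M) := by
  refine testBit_foldr_or (.inl ⟨b, by clear * -; revert b; decide, ?_⟩)
  have low (k : Fin 5) (hk : M b.succ k = false) : (lowMask (k + 5 * b)).testBit (encode M) :=
    testBit_lowMask_ofBits (f := lowerBits M) (t := finProdFinEquiv (m := 4) (n := 5) (b, k))
      (by rw [← hk]; exact lowerBits_finProdFinEquiv M b k)
  have high (k : Fin 5) (hk : M b.succ k = true) : (highMask (k + 5 * b)).testBit (encode M) :=
    testBit_highMask_ofBits (f := lowerBits M) (t := finProdFinEquiv (m := 4) (n := 5) (b, k))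
      (by rw [← hk]; exact lowerBits_finProdFinEquiv M b k)
  simp only [Nat.testBit_and, Bool.and_eq_true]
  exact ⟨⟨⟨⟨⟨h, high 0 (by simp [hM])⟩, high 1 (by simp [hM])⟩, low 2 (by simp [hM])⟩,
    low 3 (by simp [hM])⟩, low 4 (by simp [hM])⟩

theorem search_succ (d A B : ℕ) :
    search (d + 1) A B = search d (step 0 A) (step 1 B ||| select A) := by
  rw [search, force_eq, force_eq]

theorem testBit_search_of_target_ne_zero {L : List (Fin 5 × Fin 5)} (hL : ∀ g ∈ L, g.1 ≠ g.2)
    (h0 : ∀ g ∈ L, g.2 ≠ 0) {M : Fin 5 → Fin 5 → Bool} (hM : M 0 = (decide <| · = 1)) {d A B : ℕ}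
    (hd : L.length ≤ d) (h : B.testBit (encode M)) :
    (search d A B).testBit (encode (applyCircuit L M)) := by
  induction d generalizing L M A B with
  | zero =>
    obtain rfl : L = [] := List.length_eq_zero_iff.1 (Nat.le_zero.1 hd)
    exact h
  | succ d ih =>
    rw [search_succ]
    cases L with
    | nil => exact ih hL h0 hM (Nat.zero_le d) (by simp [Nat.testBit_or, testBit_step_self h])
    | cons g L =>
      rw [List.forall_mem_cons] at hL h0
      rw [applyCircuit_cons]
      refine ih hL.2 h0.2 ((applyGate_of_ne h0.1 M).trans hM) (Nat.le_of_succ_le_succ hd) ?_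
      rw [Nat.testBit_or, Bool.or_eq_true]
      exact .inl (testBit_step (c := 1) rfl hM hL.1 h0.1 h)

theorem applyCircuit_zero_of_target_ne_zero {L : List (Fin 5 × Fin 5)} (h0 : ∀ g ∈ L, g.2 ≠ 0)
    (M : Fin 5 → Fin 5 → Bool) : applyCircuit L M 0 = M 0 := by
  induction L generalizing M with
  | nil => rfl
  | cons g L ih =>
    rw [List.forall_mem_cons] at h0
    rw [applyCircuit_cons, ih h0.2, applyGate_of_ne h0.1]

/-- The number of gates with target `w`. -/
def targetCount (L : List (Fin 5 × Fin 5)) (w : Fin 5) : ℕ := (L.map Prod.snd).count w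

theorem targetCount_cons (g : Fin 5 × Fin 5) (L : List (Fin 5 × Fin 5)) (w : Fin 5) :
    targetCount (g :: L) w = targetCount L w + if g.2 = w then 1 else 0 := by
  simp [targetCount, List.count_cons]

theorem testBit_search {L : List (Fin 5 × Fin 5)} (hL : ∀ g ∈ L, g.1 ≠ g.2)
    (hc : targetCount L 0 ≤ 1) {M : Fin 5 → Fin 5 → Bool} (hM : M 0 = (decide <| · = 0))
    (hfinal : applyCircuit L M 0 = (decide <| · = 1)) {d A B : ℕ}
    (hd : L.length ≤ d) (h : A.testBit (encode M)) :
    (search d A B).testBit (encode (applyCircuit L M)) := by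
  induction L generalizing d M A B with
  | nil =>
    have := congrFun (hM.symm.trans hfinal) 0
    simp at this
  | cons g L ih =>
    obtain ⟨d, rfl⟩ : ∃ e, d = e + 1 := ⟨d - 1, by rw [List.length_cons] at hd; omega⟩
    rw [List.forall_mem_cons] at hL
    rw [search_succ, applyCircuit_cons]
    rw [applyCircuit_cons] at hfinal
    rw [targetCount_cons] at hc
    have hd' : L.length ≤ d := Nat.le_of_succ_le_succ hd
    by_cases hg : g.2 = 0
    · have h0 : ∀ g ∈ L, g.2 ≠ 0 := by
        have : targetCount L 0 = 0 := by simpa [hg] using hc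
        intro k hk hk0
        exact List.count_eq_zero.1 this (hk0 ▸ List.mem_map_of_mem hk)
      have hrow : applyGate g M 0 = (decide <| · = 1) := by
        rw [← hfinal, applyCircuit_zero_of_target_ne_zero h0]
      refine testBit_search_of_target_ne_zero hL.2 h0 hrow hd' ?_
      obtain ⟨a, ha⟩ := Fin.exists_succ_eq.2 (hg ▸ hL.1)
      have henc : encode (applyGate g M) = encode M :=
        congrArg Nat.ofBits (funext fun i => by
          rw [lowerBits, lowerBits, applyGate_of_ne (by rw [hg]; exact (Fin.succ_ne_zero _).symm)])
      rw [henc, Nat.testBit_or, Bool.or_eq_true]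
      refine .inr (testBit_select a ?_ h)
      rw [applyGate_eq_update, hg, Function.update_self, hM, ← ha] at hrow
      ext k
      have := congrFun hrow k
      fin_cases k <;> simpa using this
    · exact ih hL.2 (by omega) ((applyGate_of_ne hg M).trans hM) hfinal hd'
        (testBit_step (c := 0) rfl hM hL.1 hg h)

/-! ### Symmetries of circuits for the cyclic shift -/

theorem circuit_append {n : ℕ} (L K : List (Fin n × Fin n)) (x : Fin n → Bool) :
    circuit (L ++ K) x = circuit K (circuit L x) := List.foldl_append

theorem CNOT_comp {n : ℕ} {f : Fin n → Fin n} (hf : Function.Injective f) (a b : Fin n)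
    (x : Fin n → Bool) : CNOT a b (x ∘ f) = CNOT (f a) (f b) x ∘ f := by
  ext j
  simp [CNOT, hf.eq_iff]

theorem CNOT_CNOT {n : ℕ} {a b : Fin n} (h : a ≠ b) (x : Fin n → Bool) :
    CNOT a b (CNOT a b x) = x := by
  ext j
  by_cases hj : j = b
  · subst hj; simp [CNOT, h]
  · simp [CNOT, hj]

theorem circuit_map_comp {n : ℕ} {f : Fin n → Fin n} (hf : Function.Injective f)
    (L : List (Fin n × Fin n)) (x : Fin n → Bool) :
    circuit (L.map (Prod.map f f)) x ∘ f = circuit L (x ∘ f) := by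
  induction L generalizing x with
  | nil => rfl
  | cons g L ih =>
    change circuit (L.map (Prod.map f f)) (CNOT (f g.1) (f g.2) x) ∘ f =
      circuit L (CNOT g.1 g.2 (x ∘ f))
    rw [ih, CNOT_comp hf]

/-- The standard bilinear form on basis states. -/
def pairing {n : ℕ} (x y : Fin n → Bool) : ZMod 2 := ∑ j, (x j).toNat * (y j).toNat

theorem toNat_CNOT {n : ℕ} (a b : Fin n) (x : Fin n → Bool) (j : Fin n) :
    ((CNOT a b x j).toNat : ZMod 2) =
      (x j).toNat + if j = b then ((x a).toNat : ZMod 2) else 0 := by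
  by_cases hj : j = b
  · subst hj
    simp only [CNOT, if_true]
    generalize x a = p
    generalize x j = q
    revert p q
    decide
  · simp [CNOT, hj]

theorem pairing_CNOT {n : ℕ} (a b : Fin n) (x y : Fin n → Bool) :
    pairing (CNOT a b x) y = pairing x (CNOT b a y) := by
  simp [pairing, toNat_CNOT, add_mul, mul_add, Finset.sum_add_distrib]

theorem pairing_circuit {n : ℕ} (L : List (Fin n × Fin n)) (x y : Fin n → Bool) :
    pairing (circuit L x) y = pairing x (circuit (L.reverse.map Prod.swap) y) := by
  induction L generalizing x with
  | nil => rfl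
  | cons g L ih =>
    rw [List.reverse_cons, List.map_append, circuit_append]
    exact (ih _).trans (pairing_CNOT g.1 g.2 x _)

theorem pairing_left_ext {n : ℕ} {y z : Fin n → Bool} (h : ∀ x, pairing x y = pairing x z) :
    y = z := by
  ext j
  have pairing_single (u : Fin n → Bool) : pairing (decide <| · = j) u = ((u j).toNat : ZMod 2) :=
    (Finset.sum_eq_single j (fun i _ hi => by simp [hi]) (by simp)).trans (by simp)
  have hj := h (decide <| · = j)
  rw [pairing_single, pairing_single] at hj
  generalize y j = p at hj ⊢
  generalize z j = q at hj ⊢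
  revert p q
  decide

theorem pairing_comp {n : ℕ} (σ : Equiv.Perm (Fin n)) (x y : Fin n → Bool) :
    pairing (x ∘ σ) y = pairing x (y ∘ σ.symm) :=
  Fintype.sum_equiv σ _ _ fun j => by simp

/-- A circuit of at most eleven gates realizing the cyclic shift on five qubits. -/
structure IsShortCycle (L : List (Fin 5 × Fin 5)) : Prop where
  ne : ∀ g ∈ L, g.1 ≠ g.2
  length_le : L.length ≤ 11
  eq : circuit L = fun x => x ∘ finRotate 5

/-- Move the first gate of a circuit past the cyclic shift. -/
def twist : List (Fin 5 × Fin 5) → List (Fin 5 × Fin 5)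
  | [] => []
  | g :: L => L ++ [Prod.map (· - 1) (· - 1) g]

/-- The transposed circuit, with wires relabelled so that the cyclic shift is preserved. -/
def reflect (L : List (Fin 5 × Fin 5)) : List (Fin 5 × Fin 5) :=
  (L.reverse.map Prod.swap).map (Prod.map Neg.neg Neg.neg)

theorem length_twist (L : List (Fin 5 × Fin 5)) : (twist L).length = L.length := by
  cases L <;> simp [twist]

theorem twist_iterate_append (L K : List (Fin 5 × Fin 5)) :
    twist^[L.length] (L ++ K) = K ++ L.map (Prod.map (· - 1) (· - 1)) := by
  induction L generalizing K with
  | nil => simp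
  | cons g L ih =>
    rw [List.length_cons, Function.iterate_succ_apply, List.cons_append, twist, List.append_assoc,
      ih]
    simp

namespace IsShortCycle

variable {L : List (Fin 5 × Fin 5)}

theorem twist (hL : IsShortCycle L) : IsShortCycle (twist L) := by
  cases L with
  | nil => exact hL
  | cons g L =>
    have hne := hL.ne
    rw [List.forall_mem_cons] at hne
    refine ⟨?_, (length_twist _).trans_le hL.length_le, ?_⟩
    · intro h hh
      rcases List.mem_append.1 hh with hh | hh
      · exact hne.2 h hh
      · rw [List.mem_singleton.1 hh]
        exact fun e => hne.1 (sub_left_injective e)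
    · funext x
      have h : circuit L x = CNOT g.1 g.2 x ∘ finRotate 5 := by
        rw [← congrFun hL.eq (CNOT g.1 g.2 x)]
        exact congrArg (circuit L) (CNOT_CNOT hne.1 x).symm
      rw [_root_.twist, circuit_append, h]
      refine (CNOT_comp (finRotate 5).injective _ _ _).trans ?_
      simp only [finRotate_apply, Prod.map_fst, Prod.map_snd, sub_add_cancel]
      rw [CNOT_CNOT hne.1]

theorem map_sub_one (hL : IsShortCycle L) :
    IsShortCycle (L.map (Prod.map (· - 1) (· - 1))) := by
  have h := twist_iterate_append L []
  rw [List.append_nil, List.nil_append] at h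
  rw [← h]
  exact Function.Iterate.rec IsShortCycle hL (fun _ => twist) _

theorem reflect (hL : IsShortCycle L) : IsShortCycle (reflect L) := by
  refine ⟨?_, by simpa [_root_.reflect] using hL.length_le, ?_⟩
  · intro g hg
    simp only [_root_.reflect, List.map_map, List.mem_map, List.mem_reverse] at hg
    obtain ⟨g, hg, rfl⟩ := hg
    exact fun e => hL.ne g hg (neg_injective e).symm
  · have transposed (y : Fin 5 → Bool) :
        circuit (L.reverse.map Prod.swap) y = y ∘ (finRotate 5).symm :=
      pairing_left_ext fun x => by rw [← pairing_circuit, hL.eq, pairing_comp]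
    funext x
    have h := circuit_map_comp (neg_injective (G := Fin 5)) (L.reverse.map Prod.swap) x
    rw [transposed] at h
    funext j
    have hj := congrFun h (-j)
    simp only [Function.comp_apply, neg_neg] at hj
    rw [_root_.reflect, hj, Function.comp_apply]
    congr 1
    clear * -
    revert j
    decide

theorem two_le_targetCount_zero (hL : IsShortCycle L) : 2 ≤ targetCount L 0 := by
  by_contra! hc
  have hfinal : applyCircuit L (fun j k => decide (k = j)) =
      fun j k => decide (k = finRotate 5 j) := by
    funext j k
    rw [applyCircuit, hL.eq]
    rfl
  have h := testBit_search (A := 2 ^ (2 ^ 1 + 2 ^ 7 + 2 ^ 13 + 2 ^ 19)) (B := 0) hL.ne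
    (Nat.le_of_lt_succ hc) rfl (by rw [hfinal]; rfl) hL.length_le (by
      have : encode (fun j k => decide (k = j)) = 2 ^ 1 + 2 ^ 7 + 2 ^ 13 + 2 ^ 19 := by
        decide +kernel
      rw [this, Nat.testBit_two_pow_self])
  have hcode : encode (fun j k => decide (k = finRotate 5 j)) =
      2 ^ 2 + 2 ^ 8 + 2 ^ 14 + 2 ^ 15 := by decide +kernel
  rw [hfinal, hcode, search_eleven_excludes] at h
  exact Bool.false_ne_true h

end IsShortCycle

theorem targetCount_map_sub_one (L : List (Fin 5 × Fin 5)) (w : Fin 5) :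
    targetCount (L.map (Prod.map (· - 1) (· - 1))) w = targetCount L (w + 1) := by
  induction L with
  | nil => rfl
  | cons g L ih =>
    rw [List.map_cons, targetCount_cons, targetCount_cons, ih]
    simp [sub_eq_iff_eq_add]

theorem sum_targetCount (L : List (Fin 5 × Fin 5)) : ∑ w, targetCount L w = L.length := by
  induction L with
  | nil => simp [targetCount]
  | cons g L ih => simp [targetCount_cons, Finset.sum_add_distrib, ih]

theorem targetCount_append_singleton (L : List (Fin 5 × Fin 5)) (g : Fin 5 × Fin 5) (w : Fin 5) :
    targetCount (L ++ [g]) w = targetCount L w + if g.2 = w then 1 else 0 := by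
  simp [targetCount, List.count_singleton]

namespace IsShortCycle

variable {L : List (Fin 5 × Fin 5)}

theorem two_le_targetCount (hL : IsShortCycle L) (w : Fin 5) : 2 ≤ targetCount L w := by
  induction w using Fin.induction generalizing L with
  | zero => exact hL.two_le_targetCount_zero
  | succ i ih =>
    rw [← Fin.coeSucc_eq_succ, ← targetCount_map_sub_one]
    exact ih hL.map_sub_one

theorem three_le_targetCount_head {g : Fin 5 × Fin 5} (hL : IsShortCycle (g :: L)) :
    3 ≤ targetCount (g :: L) g.2 := by
  have h := hL.twist.two_le_targetCount g.2
  rw [_root_.twist, targetCount_append_singleton, if_neg (by simp)] at h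
  rw [targetCount_cons, if_pos rfl]
  omega

theorem eleven_le_length {b : Fin 5} (hL : IsShortCycle L) (hb : 3 ≤ targetCount L b) :
    11 ≤ L.length := by
  rw [← sum_targetCount, Fin.sum_univ_five]
  have h := hL.two_le_targetCount
  have := h 0; have := h 1; have := h 2; have := h 3; have := h 4
  fin_cases b <;> simp only [Fin.reduceFinMk, Fin.zero_eta, Fin.mk_one] at hb <;> omega

theorem eq_of_three_le_targetCount {a b : Fin 5} (hL : IsShortCycle L)
    (ha : 3 ≤ targetCount L a) (hb : 3 ≤ targetCount L b) : a = b := by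
  by_contra hab
  have hsum := hL.length_le
  rw [← sum_targetCount, ← Finset.add_sum_erase _ _ (Finset.mem_univ a),
    ← Finset.add_sum_erase _ _ (Finset.mem_erase.2 ⟨Ne.symm hab, Finset.mem_univ b⟩)] at hsum
  have hrest : _ ≤ ∑ w ∈ (Finset.univ.erase a).erase b, targetCount L w :=
    Finset.card_nsmul_le_sum _ _ 2 fun w _ => hL.two_le_targetCount w
  rw [Finset.card_erase_of_mem (Finset.mem_erase.2 ⟨Ne.symm hab, Finset.mem_univ b⟩),
    Finset.card_erase_of_mem (Finset.mem_univ a), Finset.card_univ, Fintype.card_fin] at hrest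
  simp only [smul_eq_mul] at hrest
  omega

theorem length_eq (hL : IsShortCycle L) : L.length = 11 := by
  cases L with
  | nil => exact absurd hL.two_le_targetCount_zero (by simp [targetCount])
  | cons g L => exact le_antisymm hL.length_le (hL.eleven_le_length hL.three_le_targetCount_head)

/-- The targets of the gates run backwards through the wires. -/
theorem target_getElem (hL : IsShortCycle L) {i : ℕ} (hi : i < L.length) :
    L[i].2 = (fun w : Fin 5 => w - 1)^[i] (L[0]'(Nat.zero_lt_of_lt hi)).2 := by
  induction i generalizing L with
  | zero => rfl
  | succ i ih =>
    match L, hL with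
    | [], _ => simp at hi
    | [g], hL => exact absurd hL.length_eq (by simp)
    | g :: h :: L, hL =>
      have hne : g.2 ≠ g.2 - 1 := Ne.symm (by simp)
      have hh : h.2 = g.2 - 1 := by
        refine hL.twist.eq_of_three_le_targetCount hL.twist.three_le_targetCount_head ?_
        have := hL.two_le_targetCount (g.2 - 1)
        rw [targetCount_cons, if_neg hne] at this
        rw [_root_.twist, targetCount_append_singleton, Prod.map_snd, if_pos rfl]
        omega
      have key := ih hL.twist (by rw [length_twist]; omega)
      have hi' : i < (h :: L).length := Nat.lt_of_succ_lt_succ hi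
      simp only [_root_.twist, List.getElem_append_left hi',
        List.getElem_append_left (Nat.zero_lt_of_lt hi')] at key
      simpa [hh] using key

theorem control_getElem (hL : IsShortCycle L) {i : ℕ} (hi : i < 11) :
    (L[i]'(hi.trans_eq hL.length_eq.symm)).1 =
      -(fun w : Fin 5 => w - 1)^[10 - i] (-(L[10]'(by rw [hL.length_eq]; omega)).1) := by
  have hlen := hL.length_eq
  have h := hL.reflect.target_getElem (i := 10 - i) (by rw [hL.reflect.length_eq]; omega)
  have hsub : 11 - 1 - (10 - i) = i := by omega
  simp only [_root_.reflect, List.getElem_map, List.getElem_reverse, hlen, hsub,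
    Prod.map_snd, Prod.snd_swap, Nat.reduceSub, Nat.sub_zero] at h
  exact neg_eq_iff_eq_neg.1 h

end IsShortCycle

theorem not_isShortCycle (L : List (Fin 5 × Fin 5)) : ¬ IsShortCycle L := by
  intro hL
  have hlen := hL.length_eq
  have none_works : ∀ a b : Fin 5, ∃ k j, circuit
      (List.ofFn fun i : Fin 11 =>
        (-(fun w : Fin 5 => w - 1)^[10 - i.val] (-a), (fun w : Fin 5 => w - 1)^[i.val] b))
      (decide <| · = k) j ≠ decide (finRotate 5 j = k) := by decide +kernel
  obtain ⟨k, j, h⟩ := none_works L[10].1 L[0].2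
  refine h ?_
  refine Eq.trans ?_ (congrFun (congrFun hL.eq (decide <| · = k)) j)
  congr 1
  refine List.ext_getElem (by simp [hlen]) fun i _ hi => ?_
  rw [List.getElem_ofFn]
  exact Prod.ext (hL.control_getElem (hi.trans_eq hlen)).symm (hL.target_getElem hi).symm

/-- On five qubits, the minimal number of CNOT gates realizing the cyclic shift
`j ↦ j + 1 (mod 5)` equals `12`, i.e. `C(5) = 12`. -/
theorem cycle5_cnot_cost_eq_twelve :
    sInf {k : ℕ | ∃ L : List (Fin 5 × Fin 5), (∀ g ∈ L, g.1 ≠ g.2) ∧ L.length = k ∧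
        circuit L = fun x => x ∘ (finRotate 5)} = 12 := by
  refine IsLeast.csInf_eq ⟨⟨[(0, 1), (1, 0), (0, 1), (1, 2), (2, 1), (1, 2), (2, 3), (3, 2), (2, 3),
    (3, 4), (4, 3), (3, 4)], by decide, rfl, ?_⟩, ?_⟩
  · funext x j
    revert x j
    decide +kernel
  · rintro k ⟨L, hne, rfl, hL⟩
    by_contra! hlt
    exact not_isShortCycle L ⟨hne, Nat.le_of_lt_succ hlt, hL⟩
end
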